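/- Let m > K ≥ 1, let Φ = I_m be the m×m identity matrix, let x ∈ ℝ^m have x_i = 1 for 1 ≤ i ≤ K and x_i = 0 otherwise, let v = e_m be the m-th standard basis vector, and set y = Φx + v. Then the restricted isometry constant of Φ of order K+1 equals 0, SNR = K, MAR = 1, and the index m ∉ supp(x) attains the maximum of |⟨φ_i, y⟩| over all i ∈ {1,…,m}; consequently there exists a run of OMP on (Φ, y) whose first selected index is t^1 = m ∉ supp(x). In particular, exact support recovery of all K-sparse signals with OMP requires SNR > K. -/

import Mathlib

noncomputable section
open Finset

/-- `Vec n` is `ℝ^n` with the Euclidean (ℓ²) norm. -/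
abbrev Vec (n : ℕ) := EuclideanSpace ℝ (Fin n)

/-- The standard inner product `⟨u, v⟩ = ∑ i, u i * v i`. -/
def dot {n : ℕ} (u v : Vec n) : ℝ := ∑ i, u i * v i

/-- The `j`-th column of a matrix, as a Euclidean vector. -/
def col {m n : ℕ} (Φ : Matrix (Fin m) (Fin n) ℝ) (j : Fin n) : Vec m :=
  WithLp.toLp 2 fun i => Φ i j

/-- Matrix-vector multiplication `Φ x`, valued in Euclidean space. -/
def mulVec' {m n : ℕ} (Φ : Matrix (Fin m) (Fin n) ℝ) (x : Vec n) : Vec m :=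
  WithLp.toLp 2 fun i => ∑ j, Φ i j * x j

/-- The support of a vector, as a `Finset`. -/
def suppF {n : ℕ} (x : Vec n) : Finset (Fin n) :=
  Finset.univ.filter fun i => x i ≠ 0

/-- Restriction of a vector to an index set (zero outside the set). -/
def restrict {n : ℕ} (x : Vec n) (S : Finset (Fin n)) : Vec n :=
  WithLp.toLp 2 fun i => if i ∈ S then x i else 0

/-- `RIPConst Φ L δ` : δ is the restricted isometry constant of `Φ` of order `L`,
i.e. the smallest `c ≥ 0` such that `(1-c)‖u‖² ≤ ‖Φu‖² ≤ (1+c)‖u‖²` for all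
`L`-sparse `u`. -/
def RIPConst {m n : ℕ} (Φ : Matrix (Fin m) (Fin n) ℝ) (L : ℕ) (δ : ℝ) : Prop :=
  IsLeast {c : ℝ | 0 ≤ c ∧ ∀ u : Vec n, (suppF u).card ≤ L →
    (1 - c) * ‖u‖ ^ 2 ≤ ‖mulVec' Φ u‖ ^ 2 ∧ ‖mulVec' Φ u‖ ^ 2 ≤ (1 + c) * ‖u‖ ^ 2} δ

/-- Signal-to-noise ratio `‖Φx‖²/‖v‖²`. -/
def SNR {m n : ℕ} (Φ : Matrix (Fin m) (Fin n) ℝ) (x : Vec n) (v : Vec m) : ℝ :=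
  ‖mulVec' Φ x‖ ^ 2 / ‖v‖ ^ 2

/-- A run of `N` iterations of Orthogonal Matching Pursuit on data `(Φ, y)`:
`idx (k+1) = t^{k+1}` is the index selected at iteration `k+1`, `sets k = T^k`,
`est k = x^k` and `res k = r^k`. -/
structure OMPRun {m n : ℕ} (Φ : Matrix (Fin m) (Fin n) ℝ) (y : Vec m) (N : ℕ) where
  idx : ℕ → Fin n
  sets : ℕ → Finset (Fin n)
  est : ℕ → Vec n
  res : ℕ → Vec m
  sets_zero : sets 0 = ∅
  est_zero : est 0 = 0
  res_zero : res 0 = y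
  idx_not_mem : ∀ k < N, idx (k + 1) ∉ sets k
  idx_max : ∀ k < N, ∀ i : Fin n, i ∉ sets k →
    |dot (col Φ i) (res k)| ≤ |dot (col Φ (idx (k + 1))) (res k)|
  sets_succ : ∀ k < N, sets (k + 1) = insert (idx (k + 1)) (sets k)
  est_supp : ∀ k < N, suppF (est (k + 1)) ⊆ sets (k + 1)
  est_min : ∀ k < N, ∀ u : Vec n, suppF u ⊆ sets (k + 1) →
    ‖y - mulVec' Φ (est (k + 1))‖ ≤ ‖y - mulVec' Φ u‖
  res_succ : ∀ k < N, res (k + 1) = y - mulVec' Φ (est (k + 1))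

/-- The vector `Φᵀ w` restricted to an index set `A` (the vector of correlations
`⟨φ_i, w⟩` for `i ∈ A`, zero outside `A`), as a Euclidean vector. -/
def colDots {m n : ℕ} (Φ : Matrix (Fin m) (Fin n) ℝ) (A : Finset (Fin n)) (w : Vec m) : Vec n :=
  WithLp.toLp 2 fun i => if i ∈ A then dot (col Φ i) w else 0

/-- The vector `Φᵀ w` of all column correlations, as a plain function (so `‖·‖`
is the sup/ℓ∞ norm). -/
def dualVec {m n : ℕ} (Φ : Matrix (Fin m) (Fin n) ℝ) (w : Vec m) : Fin n → ℝ :=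
  fun i => dot (col Φ i) w

/-- `P⊥_S w` : the projection of `w` onto the orthogonal complement of the span
of the columns of `Φ` indexed by `S`. -/
def perpProj {m n : ℕ} (Φ : Matrix (Fin m) (Fin n) ℝ) (S : Finset (Fin n)) (w : Vec m) : Vec m :=
  w - (Submodule.orthogonalProjectionOnto (Submodule.span ℝ (col Φ '' (S : Set (Fin n)))) w : Vec m)

/-- The `j`-th largest value (1-indexed) among `{|x i| : i ∈ Γ}` (with
multiplicities); `0` if `j > |Γ|` or `j = 0`. -/
def kthLargest {n : ℕ} (x : Vec n) (Γ : Finset (Fin n)) (j : ℕ) : ℝ :=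
  if 1 ≤ j ∧ j ≤ Γ.card then
    (Multiset.sort (Γ.val.map fun i => |x i|) (· ≤ ·)).getD (Γ.card - j) 0
  else 0


/-!
A run of OMP may break ties in any way: a least-squares estimate exists on every support set, and
as long as some index is unused a maximal correlation is attained, so any index that maximizes the
initial correlations is the first choice of some run. For `Φ = 1` the correlations are the entries
of `y`. Here `y` is the indicator of `supp(x) ∪ {m}`, so all its nonzero entries are tied and the
wrong index `m` may be chosen first.
-/

theorem mulVec'_eq_toLpLin {m n : ℕ} (Φ : Matrix (Fin m) (Fin n) ℝ) (u : Vec n) :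
    mulVec' Φ u = Matrix.toLpLin 2 2 Φ u :=
  rfl

theorem mulVec'_zero {m n : ℕ} (Φ : Matrix (Fin m) (Fin n) ℝ) : mulVec' Φ 0 = 0 := by
  rw [mulVec'_eq_toLpLin, map_zero]

theorem mulVec'_one {n : ℕ} (u : Vec n) : mulVec' 1 u = u := by
  rw [mulVec'_eq_toLpLin, Matrix.toLpLin_one, LinearMap.id_apply]

theorem dot_col_one {n : ℕ} (i : Fin n) (u : Vec n) : dot (col 1 i) u = u i := by
  simp [dot, col, Matrix.one_apply]

theorem RIPConst_zero_iff {m n : ℕ} {Φ : Matrix (Fin m) (Fin n) ℝ} {L : ℕ} :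
    RIPConst Φ L 0 ↔ ∀ u, #(suppF u) ≤ L → ‖mulVec' Φ u‖ = ‖u‖ := by
  refine ⟨fun h u hu => ?_, fun h => ⟨⟨le_rfl, fun u hu => by simp [h u hu]⟩, fun _ hc => hc.1⟩⟩
  obtain ⟨hlower, hupper⟩ := h.1.2 u hu
  rw [sub_zero, one_mul] at hlower
  rw [add_zero, one_mul] at hupper
  exact (sq_eq_sq₀ (norm_nonneg _) (norm_nonneg _)).mp (hupper.antisymm hlower)

section Indicator

variable {n : ℕ} {S T : Finset (Fin n)}

/-- The indicator vector of an index set, the signal or noise with all nonzero entries equal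
to `1`. -/
def indicatorVec (S : Finset (Fin n)) : Vec n :=
  WithLp.toLp 2 fun i => if i ∈ S then 1 else 0

theorem suppF_indicatorVec (S : Finset (Fin n)) : suppF (indicatorVec S) = S := by
  simp [suppF, indicatorVec]

theorem norm_indicatorVec_sq (S : Finset (Fin n)) : ‖indicatorVec S‖ ^ 2 = #S := by
  simp [EuclideanSpace.real_norm_sq_eq, indicatorVec, ite_pow]

theorem indicatorVec_union_of_disjoint (h : Disjoint S T) :
    indicatorVec (S ∪ T) = indicatorVec S + indicatorVec T := by
  ext i
  have hdisj : i ∈ S → i ∉ T := fun hi => Finset.disjoint_left.mp h hi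
  by_cases hS : i ∈ S <;> simp_all [indicatorVec]

theorem abs_indicatorVec_apply_le {j : Fin n} (hj : j ∈ S) (i : Fin n) :
    |indicatorVec S i| ≤ |indicatorVec S j| := by
  by_cases hi : i ∈ S <;> simp [indicatorVec, hi, hj]

theorem SNR_one_indicatorVec (S T : Finset (Fin n)) :
    SNR 1 (indicatorVec S) (indicatorVec T) = #S / #T := by
  rw [SNR, mulVec'_one, norm_indicatorVec_sq, norm_indicatorVec_sq]

theorem inf'_suppF_indicatorVec (hne : (suppF (indicatorVec S)).Nonempty) :
    (suppF (indicatorVec S)).inf' hne (fun j => |indicatorVec S j| ^ 2) = 1 := by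
  have hone : ∀ j ∈ suppF (indicatorVec S), |indicatorVec S j| ^ 2 = 1 := fun j hj => by
    rw [suppF_indicatorVec] at hj
    simp [indicatorVec, hj]
  rw [Finset.inf'_congr hne rfl hone, Finset.inf'_const]

end Indicator

theorem exists_mem_forall_norm_sub_map_le {𝕜 E F : Type*} [RCLike 𝕜] [AddCommGroup E] [Module 𝕜 E]
    [NormedAddCommGroup F] [InnerProductSpace 𝕜 F] (A : E →ₗ[𝕜] F) (p : Submodule 𝕜 E)
    [(p.map A).HasOrthogonalProjection] (y : F) :
    ∃ u ∈ p, ∀ w ∈ p, ‖y - A u‖ ≤ ‖y - A w‖ := by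
  obtain ⟨u, hu, hproj⟩ := (p.map A).starProjection_apply_mem y
  refine ⟨u, hu, fun w hw => ?_⟩
  rw [hproj, Submodule.starProjection_minimal]
  exact ciInf_le ⟨0, Set.forall_mem_range.mpr fun _ => norm_nonneg _⟩
    (⟨A w, Submodule.mem_map_of_mem hw⟩ : p.map A)

section LeastSquares

variable {n : ℕ} {S : Finset (Fin n)} {u : Vec n}

theorem suppF_subset_iff : suppF u ⊆ S ↔ ∀ i ∉ S, u i = 0 := by
  simp only [suppF, Finset.subset_iff, Finset.mem_filter_univ, ne_eq, not_imp_comm]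

theorem eq_zero_of_suppF_subset_empty (hu : suppF u ⊆ ∅) : u = 0 := by
  ext i
  exact suppF_subset_iff.mp hu i (Finset.notMem_empty i)

/-- The subspace of vectors whose support lies in `S`, over which OMP solves its least-squares
problems. -/
def supportedIn (S : Finset (Fin n)) : Submodule ℝ (Vec n) where
  carrier := {u | suppF u ⊆ S}
  zero_mem' := by simp [suppF]
  add_mem' := by simp +contextual [suppF_subset_iff]
  smul_mem' := by simp +contextual [suppF_subset_iff]

theorem exists_leastSquares {m : ℕ} (Φ : Matrix (Fin m) (Fin n) ℝ) (y : Vec m)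
    (S : Finset (Fin n)) :
    ∃ u : Vec n, suppF u ⊆ S ∧ ∀ w : Vec n, suppF w ⊆ S →
      ‖y - mulVec' Φ u‖ ≤ ‖y - mulVec' Φ w‖ :=
  exists_mem_forall_norm_sub_map_le (Matrix.toLpLin 2 2 Φ) (supportedIn S) y

end LeastSquares

theorem exists_notMem_forall_notMem_le {α β : Type*} [Fintype α] [LinearOrder β] (f : α → β)
    {S : Finset α} (hS : S ≠ univ) : ∃ t ∉ S, ∀ i ∉ S, f i ≤ f t := by
  classical
  have hne : Sᶜ.Nonempty := by rwa [Finset.nonempty_iff_ne_empty, ne_eq, Finset.compl_eq_empty_iff]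
  simpa only [Finset.mem_compl] using Finset.exists_max_image Sᶜ f hne

section Greedy

variable {α : Type*} [DecidableEq α]

/-- The sets `T^k` built by an algorithm that starts from `∅` and adds the index `select T` to the
current set `T` at every step. -/
def greedySet (select : Finset α → α) : ℕ → Finset α
  | 0 => ∅
  | k + 1 => insert (select (greedySet select k)) (greedySet select k)

theorem card_greedySet_le (select : Finset α → α) (k : ℕ) : #(greedySet select k) ≤ k := by
  induction k with
  | zero => rfl
  | succ k ih => exact (Finset.card_insert_le _ _).trans (Nat.succ_le_succ ih)

theorem greedySet_ne_univ [Fintype α] (select : Finset α → α) {k : ℕ} (hk : k < Fintype.card α) :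
    greedySet select k ≠ univ := fun h =>
  ((card_greedySet_le select k).trans_lt hk).ne (by rw [h, Finset.card_univ])

end Greedy

section Run

variable {m n N : ℕ} (Φ : Matrix (Fin m) (Fin n) ℝ) (y : Vec m)

/-- The OMP run determined by a least-squares solver `est` and a rule `select` that attains the
maximal correlation among the unused indices. The value `idx 0` carries no meaning. -/
def OMPRun.ofSelect (hN : N ≤ n) (est : Finset (Fin n) → Vec n) (select : Finset (Fin n) → Fin n)
    (est_supp : ∀ S, suppF (est S) ⊆ S)
    (est_min : ∀ S u, suppF u ⊆ S → ‖y - mulVec' Φ (est S)‖ ≤ ‖y - mulVec' Φ u‖)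
    (select_not_mem : ∀ S ≠ univ, select S ∉ S)
    (select_max : ∀ S ≠ univ, ∀ i ∉ S, |dot (col Φ i) (y - mulVec' Φ (est S))| ≤
      |dot (col Φ (select S)) (y - mulVec' Φ (est S))|) :
    OMPRun Φ y N :=
  have est_empty : est ∅ = 0 := eq_zero_of_suppF_subset_empty (est_supp ∅)
  have ne_univ : ∀ k < N, greedySet select k ≠ univ := fun k hk =>
    greedySet_ne_univ select (by rw [Fintype.card_fin]; omega)
  { idx k := select (greedySet select (k - 1))
    sets := greedySet select
    est k := est (greedySet select k)
    res k := y - mulVec' Φ (est (greedySet select k))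
    sets_zero := rfl
    est_zero := est_empty
    res_zero := by rw [greedySet, est_empty, mulVec'_zero, sub_zero]
    idx_not_mem k hk := select_not_mem _ (ne_univ k hk)
    idx_max k hk := select_max _ (ne_univ k hk)
    sets_succ _ _ := rfl
    est_supp _ _ := est_supp _
    est_min _ _ := est_min _
    res_succ _ _ := rfl }

theorem OMPRun.exists_idx_one_eq (hN : N ≤ n) {j : Fin n}
    (hj : ∀ i, |dot (col Φ i) y| ≤ |dot (col Φ j) y|) :
    ∃ run : OMPRun Φ y N, run.idx 1 = j := by
  choose est est_supp est_min using exists_leastSquares Φ y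
  have hres : y - mulVec' Φ (est ∅) = y := by
    rw [eq_zero_of_suppF_subset_empty (est_supp ∅), mulVec'_zero, sub_zero]
  have exists_select : ∀ S, ∃ t, (S = ∅ → t = j) ∧ (S ≠ univ → t ∉ S ∧ ∀ i ∉ S,
      |dot (col Φ i) (y - mulVec' Φ (est S))| ≤ |dot (col Φ t) (y - mulVec' Φ (est S))|) := by
    intro S
    rcases eq_or_ne S ∅ with rfl | hempty
    · exact ⟨j, fun _ => rfl, fun _ => ⟨Finset.notMem_empty j, fun i _ => hres.symm ▸ hj i⟩⟩
    rcases eq_or_ne S univ with rfl | huniv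
    · exact ⟨j, fun _ => rfl, fun h => absurd rfl h⟩
    obtain ⟨t, ht⟩ := exists_notMem_forall_notMem_le
      (fun i => |dot (col Φ i) (y - mulVec' Φ (est S))|) huniv
    exact ⟨t, fun h => absurd h hempty, fun _ => ht⟩
  choose select select_empty hselect using exists_select
  exact ⟨OMPRun.ofSelect Φ y hN est select est_supp est_min (fun S hS => (hselect S hS).1)
    (fun S hS => (hselect S hS).2), select_empty ∅ rfl⟩

end Run

/-- the explicit counterexample with identity matrix: `δ_{K+1} = 0`,
`SNR = K`, `MAR = 1`, the index `m` attains the maximal correlation with `y`,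
and some run of OMP selects `t¹ = m ∉ supp(x)`. -/
theorem stmt2 (K m : ℕ) (hK : 1 ≤ K) (hm : K < m) :
    let Φ : Matrix (Fin m) (Fin m) ℝ := 1
    let x : Vec m := WithLp.toLp 2 fun i => if (i : ℕ) < K then 1 else 0
    let lst : Fin m := ⟨m - 1, by omega⟩
    let v : Vec m := WithLp.toLp 2 fun i => if i = lst then 1 else 0
    let y : Vec m := mulVec' Φ x + v
    RIPConst Φ (K + 1) 0 ∧
    SNR Φ x v = K ∧
    (∃ hne : (suppF x).Nonempty,
      ((suppF x).inf' hne fun j => |x j| ^ 2) / (‖x‖ ^ 2 / K) = 1) ∧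
    lst ∉ suppF x ∧
    (∀ i : Fin m, |dot (col Φ i) y| ≤ |dot (col Φ lst) y|) ∧
    ∃ run : OMPRun Φ y K, run.idx 1 = lst := by
  intro Φ x lst v y
  let S : Finset (Fin m) := {i | (i : ℕ) < K}
  have hcard : #S = K := by rw [Fin.card_filter_val_lt, min_eq_right hm.le]
  have hlst : lst ∉ S := by simp only [S, lst, Finset.mem_filter_univ]; omega
  have hx : x = indicatorVec S := by simp [x, S, indicatorVec]
  have hv : v = indicatorVec {lst} := by simp [v, indicatorVec]
  have hy : y = indicatorVec (S ∪ {lst}) := by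
    rw [indicatorVec_union_of_disjoint (Finset.disjoint_singleton_right.mpr hlst), ← hx, ← hv,
      ← mulVec'_one x]
  have hmax : ∀ i, |dot (col Φ i) y| ≤ |dot (col Φ lst) y| := fun i => by
    rw [dot_col_one, dot_col_one, hy]
    exact abs_indicatorVec_apply_le (by simp) i
  clear_value x v
  subst hx hv
  refine ⟨RIPConst_zero_iff.mpr fun u _ => by rw [mulVec'_one], ?_, ⟨?_, ?_⟩, ?_, hmax,
    OMPRun.exists_idx_one_eq Φ y hm.le hmax⟩
  · rw [SNR_one_indicatorVec, hcard, Finset.card_singleton, Nat.cast_one, div_one]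
  · rw [suppF_indicatorVec]
    exact Finset.card_pos.mp (hcard ▸ hK)
  · have hK0 : (K : ℝ) ≠ 0 := by positivity
    rw [inf'_suppF_indicatorVec, norm_indicatorVec_sq, hcard, div_self hK0, div_one]
  · rwa [suppF_indicatorVec]

end
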